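/- The quintic B-spline quasi-interpolant reproduces quintic polynomials: for every polynomial p of degree at most 5 and every x ∈ ℝ, Σ_{k∈ℤ} [ (13/240)(p(k−2) + p(k+2)) − (7/15)(p(k−1) + p(k+1)) + (73/40)p(k) ] · B₅(x − (k−3)) = p(x). -/

import Mathlib

open MeasureTheory

/-- The cardinal B-spline of degree `d`: `B₀` is the indicator function of `[0,1)` and
`B_{d+1} = B_d * B₀` (convolution), so `B_d` is supported on `[0, d+1]`. -/
noncomputable def cardB : ℕ → ℝ → ℝ
  | 0 => Set.indicator (Set.Ico (0 : ℝ) 1) 1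
  | (d + 1) => fun x => ∫ t : ℝ, cardB d (x - t) * cardB 0 t


/-- Truncated power. -/
noncomputable def tpw (d : ℕ) (x : ℝ) : ℝ := if 0 ≤ x then x ^ d else 0

lemma tpw_mono (d : ℕ) : Monotone (tpw d) := by
  intro a b hab
  unfold tpw
  split_ifs with h1 h2 h2
  · gcongr
  · exact absurd (h1.trans hab) h2
  · positivity
  · exact le_rfl

lemma tpw_cont (d : ℕ) : Continuous (tpw (d + 1)) := by
  have : tpw (d + 1) = fun x => (max x 0) ^ (d + 1) := by
    funext x
    unfold tpw
    split_ifs with h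
    · rw [max_eq_left h]
    · rw [max_eq_right (not_le.mp h).le]; simp
  rw [this]
  fun_prop

lemma tpw_deriv (d : ℕ) (x : ℝ) :
    HasDerivWithinAt (tpw (d + 1)) ((d + 1 : ℝ) * tpw d x) (Set.Ioi x) x := by
  by_cases h : 0 ≤ x
  · have h1 := ((hasDerivAt_pow (d + 1) x).hasDerivWithinAt (s := Set.Ioi x))
    have h2 : (d + 1 : ℝ) * tpw d x = ((d + 1 : ℕ) : ℝ) * x ^ (d + 1 - 1) := by
      simp [tpw, h]
    rw [h2]
    refine h1.congr ?_ ?_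
    · intro y hy
      have : 0 ≤ y := h.trans (le_of_lt hy)
      simp [tpw, this]
    · simp [tpw, h]
  · have h2 : (d + 1 : ℝ) * tpw d x = 0 := by simp [tpw, h]
    rw [h2]
    apply HasDerivAt.hasDerivWithinAt
    refine (hasDerivAt_const x (0 : ℝ)).congr_of_eventuallyEq ?_
    filter_upwards [Iio_mem_nhds (not_le.mp h)] with y hy
    have : ¬ (0 ≤ y) := not_le.mpr hy
    simp [tpw, this]

lemma tpw_int (d : ℕ) (a b : ℝ) (hab : a ≤ b) :
    ∫ u in a..b, tpw d u = (tpw (d + 1) b - tpw (d + 1) a) / (d + 1) := by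
  have h := intervalIntegral.integral_eq_sub_of_hasDeriv_right_of_le hab
    (tpw_cont d).continuousOn (fun x _ => tpw_deriv d x)
    (((tpw_mono d).intervalIntegrable).const_mul (d + 1 : ℝ))
  rw [intervalIntegral.integral_const_mul] at h
  have : (d + 1 : ℝ) ≠ 0 := by positivity
  rw [← h]; field_simp

lemma cardB_succ (d : ℕ) (x : ℝ) : cardB (d + 1) x = ∫ u in (x - 1)..x, cardB d u := by
  have h0 : cardB (d + 1) x = ∫ t : ℝ, cardB d (x - t) * cardB 0 t := by rw [cardB.eq_2]
  rw [h0]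
  have h1 : (fun t : ℝ => cardB d (x - t) * cardB 0 t)
      = Set.indicator (Set.Ico (0 : ℝ) 1) (fun t => cardB d (x - t)) := by
    funext t
    by_cases ht : t ∈ Set.Ico (0 : ℝ) 1 <;> simp [cardB, ht]
  rw [h1, integral_indicator measurableSet_Ico, integral_Ico_eq_integral_Ioc,
    ← intervalIntegral.integral_of_le zero_le_one, intervalIntegral.integral_comp_sub_left]
  simp

lemma cardB_step (d n : ℕ) (c : ℕ → ℝ)
    (h : ∀ x, cardB d x = ∑ j ∈ Finset.range n, c j * tpw d (x - j)) (x : ℝ) :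
    cardB (d + 1) x = ∑ j ∈ Finset.range n,
      c j * ((tpw (d + 1) (x - j) - tpw (d + 1) (x - (j + 1 : ℕ))) / (d + 1)) := by
  rw [cardB_succ]
  simp_rw [h]
  rw [intervalIntegral.integral_finsetSum]
  · refine Finset.sum_congr rfl fun j _ => ?_
    rw [intervalIntegral.integral_const_mul, intervalIntegral.integral_comp_sub_right,
      tpw_int _ _ _ (by linarith)]
    congr 4
    push_cast; ring
  · intro j _
    apply IntervalIntegrable.const_mul
    apply Monotone.intervalIntegrable
    intro a b hab
    exact tpw_mono d (by linarith)

lemma cardB_formula (d : ℕ) (x : ℝ) : cardB d x = ∑ j ∈ Finset.range (d + 2),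
    ((-1) ^ j * ((d + 1).choose j : ℝ) / (d.factorial : ℝ)) * tpw d (x - j) := by
  induction d generalizing x with
  | zero =>
    simp only [cardB, Finset.sum_range_succ, Finset.sum_range_zero, tpw, Set.indicator, Set.mem_Ico]
    norm_num
    split_ifs <;> grind
  | succ d ih =>
    rw [cardB_step d (d + 2) _ ih]
    have hd : (d + 1 : ℝ) ≠ 0 := by positivity
    have hf : (d.factorial : ℝ) ≠ 0 := by positivity
    simp_rw [sub_div, mul_sub, Finset.sum_sub_distrib]
    rw [Finset.sum_range_succ' _ (d + 2), Finset.sum_range_succ' _ (d + 1),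
      Finset.sum_range_succ _ (d + 1), Finset.sum_range_succ _ (d + 1)]
    have : ∀ j ∈ Finset.range (d + 1),
      (-1) ^ (j + 1) * ((d + 1 + 1).choose (j + 1) : ℝ) / ((d + 1).factorial : ℝ)
          * tpw (d + 1) (x - (j + 1 : ℕ))
      = (-1) ^ (j + 1) * ((d + 1).choose (j + 1) : ℝ) / (d.factorial : ℝ)
          * (tpw (d + 1) (x - (j + 1 : ℕ)) / (d + 1))
        - (-1) ^ j * ((d + 1).choose j : ℝ) / (d.factorial : ℝ)
          * (tpw (d + 1) (x - (j + 1 : ℕ)) / (d + 1)) := by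
      intro j _
      rw [Nat.choose_succ_succ (d + 1) j, Nat.factorial_succ]
      push_cast
      field_simp
      ring
    rw [Finset.sum_congr rfl this, Finset.sum_sub_distrib, Nat.factorial_succ]
    simp only [Nat.choose_self, Nat.choose_zero_right]
    push_cast
    field_simp
    ring

lemma cardB_five (x : ℝ) : cardB 5 x = (tpw 5 x - 6 * tpw 5 (x - 1) + 15 * tpw 5 (x - 2)
    - 20 * tpw 5 (x - 3) + 15 * tpw 5 (x - 4) - 6 * tpw 5 (x - 5) + tpw 5 (x - 6)) / 120 := by
  rw [cardB_formula]
  simp only [Finset.sum_range_succ, Finset.sum_range_zero]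
  norm_num [Nat.choose, Nat.factorial]
  ring

lemma tpw_pos (x : ℝ) (h : 0 ≤ x) : tpw 5 x = x ^ 5 := by simp [tpw, h]
lemma tpw_neg (x : ℝ) (h : x < 0) : tpw 5 x = 0 := by simp [tpw, h]

lemma cardB_left (x : ℝ) (h : x < 0) : cardB 5 x = 0 := by
  rw [cardB_five]
  repeat rw [tpw_neg _ (by linarith)]
  ring

lemma cardB_right (x : ℝ) (h : 6 ≤ x) : cardB 5 x = 0 := by
  rw [cardB_five]
  repeat rw [tpw_pos _ (by linarith)]
  ring

/-- The quintic B-spline quasi-interpolant reproduces quintic polynomials. -/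
theorem qnbsqi_reproduces_quintics (p : Polynomial ℝ) (hp : p.degree ≤ 5) (x : ℝ) :
    ∑' k : ℤ, ((13 / 240 : ℝ) * (p.eval ((k : ℝ) - 2) + p.eval ((k : ℝ) + 2))
        - (7 / 15) * (p.eval ((k : ℝ) - 1) + p.eval ((k : ℝ) + 1))
        + (73 / 40) * p.eval (k : ℝ)) * cardB 5 (x - ((k : ℝ) - 3)) = p.eval x := by
  obtain ⟨n, y, hy0, hy1, rfl⟩ : ∃ (n : ℤ) (y : ℝ), 0 ≤ y ∧ y < 1 ∧ x = n + y :=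
    ⟨⌊x⌋, Int.fract x, Int.fract_nonneg x, Int.fract_lt_one x, (Int.floor_add_fract x).symm⟩
  obtain ⟨b, hb⟩ : ∃ b : ℕ → ℝ, ∀ z : ℝ, p.eval z = b 0 + b 1 * (z - n) + b 2 * (z - n) ^ 2
      + b 3 * (z - n) ^ 3 + b 4 * (z - n) ^ 4 + b 5 * (z - n) ^ 5 := by
    refine ⟨(p.taylor (n : ℝ)).coeff, fun z => ?_⟩
    have h1 : (p.taylor (n : ℝ)).natDegree < 6 := by
      rw [Polynomial.natDegree_taylor]
      have := Polynomial.natDegree_le_of_degree_le (n := 5) hp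
      omega
    have h2 : p.eval z = (p.taylor (n : ℝ)).eval (z - n) := by
      rw [Polynomial.taylor_eval]; simp
    rw [h2, Polynomial.eval_eq_sum_range' h1]
    simp [Finset.sum_range_succ]
  have hinj : Function.Injective (fun j : ℕ => n + (j : ℤ) - 2) := by
    intro a b h; simpa using h
  rw [tsum_eq_sum (s := (Finset.range 6).image (fun j : ℕ => n + (j : ℤ) - 2))]
  · rw [Finset.sum_image (fun a _ b _ h => hinj h)]
    simp only [Finset.sum_range_succ, Finset.sum_range_zero, hb]
    push_cast
    have e0 : (n : ℝ) + y - (n + 0 - 2 - 3) = y + 5 := by ring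
    have e1 : (n : ℝ) + y - (n + 1 - 2 - 3) = y + 4 := by ring
    have e2 : (n : ℝ) + y - (n + 2 - 2 - 3) = y + 3 := by ring
    have e3 : (n : ℝ) + y - (n + 3 - 2 - 3) = y + 2 := by ring
    have e4 : (n : ℝ) + y - (n + 4 - 2 - 3) = y + 1 := by ring
    have e5 : (n : ℝ) + y - (n + 5 - 2 - 3) = y := by ring
    rw [e0, e1, e2, e3, e4, e5]
    have c5 : cardB 5 y = y ^ 5 / 120 := by
      rw [cardB_five, tpw_pos _ hy0]
      repeat rw [tpw_neg _ (by linarith)]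
      ring
    have c4 : cardB 5 (y + 1) = ((y + 1) ^ 5 - 6 * y ^ 5) / 120 := by
      rw [cardB_five, tpw_pos (y + 1) (by linarith), tpw_pos (y + 1 - 1) (by linarith)]
      repeat rw [tpw_neg _ (by linarith)]
      ring
    have c3 : cardB 5 (y + 2) = ((y + 2) ^ 5 - 6 * (y + 1) ^ 5 + 15 * y ^ 5) / 120 := by
      rw [cardB_five, tpw_pos (y + 2) (by linarith), tpw_pos (y + 2 - 1) (by linarith),
        tpw_pos (y + 2 - 2) (by linarith)]
      repeat rw [tpw_neg _ (by linarith)]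
      ring
    have c2 : cardB 5 (y + 3) = ((y + 3) ^ 5 - 6 * (y + 2) ^ 5 + 15 * (y + 1) ^ 5
        - 20 * y ^ 5) / 120 := by
      rw [cardB_five, tpw_pos (y + 3) (by linarith), tpw_pos (y + 3 - 1) (by linarith),
        tpw_pos (y + 3 - 2) (by linarith), tpw_pos (y + 3 - 3) (by linarith)]
      repeat rw [tpw_neg _ (by linarith)]
      ring
    have c1 : cardB 5 (y + 4) = ((y + 4) ^ 5 - 6 * (y + 3) ^ 5 + 15 * (y + 2) ^ 5
        - 20 * (y + 1) ^ 5 + 15 * y ^ 5) / 120 := by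
      rw [cardB_five, tpw_pos (y + 4) (by linarith), tpw_pos (y + 4 - 1) (by linarith),
        tpw_pos (y + 4 - 2) (by linarith), tpw_pos (y + 4 - 3) (by linarith),
        tpw_pos (y + 4 - 4) (by linarith)]
      repeat rw [tpw_neg _ (by linarith)]
      ring
    have c0 : cardB 5 (y + 5) = ((y + 5) ^ 5 - 6 * (y + 4) ^ 5 + 15 * (y + 3) ^ 5
        - 20 * (y + 2) ^ 5 + 15 * (y + 1) ^ 5 - 6 * y ^ 5) / 120 := by
      rw [cardB_five, tpw_pos (y + 5) (by linarith), tpw_pos (y + 5 - 1) (by linarith),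
        tpw_pos (y + 5 - 2) (by linarith), tpw_pos (y + 5 - 3) (by linarith),
        tpw_pos (y + 5 - 4) (by linarith), tpw_pos (y + 5 - 5) (by linarith)]
      repeat rw [tpw_neg _ (by linarith)]
      ring
    rw [c0, c1, c2, c3, c4, c5]
    ring
  · intro k hk
    have hk' : k < n - 2 ∨ n + 3 < k := by
      by_contra hcon
      push Not at hcon
      apply hk
      rw [Finset.mem_image]
      refine ⟨(k - n + 2).toNat, ?_, ?_⟩
      · rw [Finset.mem_range]; omega
      · omega
    rcases hk' with h | h
    · have : (k : ℝ) + 1 ≤ n - 2 := by exact_mod_cast h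
      rw [cardB_right _ (by linarith), mul_zero]
    · have : (n : ℝ) + 3 + 1 ≤ k := by exact_mod_cast h
      rw [cardB_left _ (by linarith), mul_zero]
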